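/- Let X be a proper geodesic metric space that is not compact, fix p₀ ∈ X, and define b : X → ℝ by b(p) = inf over all unit-speed rays c with c(0) = p₀ of b_c(p). Then for every t ∈ ℝ the level set b^{-1}({−t}) equals the topological frontier of the superlevel set C_t = b^{-1}([−t,∞)). -/

import Mathlib

/-!
A continuous function without local minima has `{b = a}` as the frontier of `{b ≥ a}`. The infimum
`b` of Busemann functions is `1`-Lipschitz, and it has no local minimum: given `p`, choose a ray `c`
whose Busemann function nearly attains `b p` and then a far point `c T`; moving from `p` towards
`c T` by `r` decreases `dist · (c T) - T`, an upper bound for `b`, by almost `r`, while the errors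
made in both choices are arbitrarily small.
-/

open Filter

/-- A unit-speed ray in a metric space: `dist (c s) (c t) = |s - t|` for all `s, t ≥ 0`. -/
def IsUnitSpeedRay {X : Type*} [MetricSpace X] (c : ℝ → X) : Prop :=
  ∀ s t : ℝ, 0 ≤ s → 0 ≤ t → dist (c s) (c t) = |s - t|

open scoped Topology NNReal

section Order

variable {X α : Type*} [TopologicalSpace X] [TopologicalSpace α] [LinearOrder α]
  [OrderClosedTopology α]

theorem frontier_preimage_Ici_of_forall_not_isLocalMin {f : X → α} (hf : Continuous f)
    (hmin : ∀ p, ¬ IsLocalMin f p) (a : α) : frontier (f ⁻¹' Set.Ici a) = f ⁻¹' {a} := by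
  rw [(isClosed_Ici.preimage hf).frontier_eq]
  ext p
  constructor
  · rintro ⟨hap, hint⟩
    refine le_antisymm (not_lt.1 fun hlt => hint ?_) hap
    exact interior_maximal (Set.preimage_mono Set.Ioi_subset_Ici_self)
      (isOpen_Ioi.preimage hf) hlt
  · rintro rfl
    exact ⟨le_rfl, fun hint => hmin p (mem_interior_iff_mem_nhds.1 hint)⟩

end Order

theorem lipschitzWith_of_forall_isGLB {X ι : Type*} [PseudoMetricSpace X] {K : ℝ≥0}
    {f : ι → X → ℝ} {g : X → ℝ} (hf : ∀ i, LipschitzWith K (f i))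
    (hg : ∀ p, IsGLB (Set.range fun i => f i p) (g p)) : LipschitzWith K g := by
  refine LipschitzWith.of_le_add_mul K fun p q => ?_
  rw [← sub_le_iff_le_add, le_isGLB_iff (hg q)]
  rintro _ ⟨i, rfl⟩
  calc g p - K * dist p q ≤ f i p - K * dist p q := by gcongr; exact (hg p).1 ⟨i, rfl⟩
    _ ≤ f i q := sub_le_iff_le_add.2 ((hf i).le_add_mul p q)

/-- The length space condition, stated without curves: in a complete space it says that distances
are infima of lengths of curves. For real normed spaces it is `exists_dist_lt_lt`. -/
def HasApproxIntermediatePoints (X : Type*) [PseudoMetricSpace X] : Prop :=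
  ∀ ⦃x z : X⦄ ⦃δ ε : ℝ⦄, 0 < δ → 0 < ε → dist x z < ε + δ → ∃ y, dist x y < δ ∧ dist y z < ε

/-- Geodesic spaces: any two points are joined by a geodesic, parametrized on `[0, 1]` with
constant speed `L`. -/
def IsGeodesicSpace (X : Type*) [PseudoMetricSpace X] : Prop :=
  ∀ x y : X, ∃ (g : ℝ → X) (L : ℝ), 0 ≤ L ∧
    (∀ s ∈ Set.Icc (0 : ℝ) 1, ∀ t ∈ Set.Icc (0 : ℝ) 1, dist (g s) (g t) = L * |s - t|) ∧
    g 0 = x ∧ g 1 = y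

/-- `c` restricts to a unit-speed geodesic on `[0, ℓ]`; its values elsewhere are irrelevant. -/
def IsUnitSpeedSegment {X : Type*} [PseudoMetricSpace X] (c : ℝ → X) (ℓ : ℝ) : Prop :=
  ∀ s ∈ Set.Icc 0 ℓ, ∀ t ∈ Set.Icc 0 ℓ, dist (c s) (c t) = |s - t|

/-- `β` is the Busemann function of `c`. This is a predicate because the limit need not exist
for an arbitrary curve `c`. -/
def IsBusemannFunction {X : Type*} [PseudoMetricSpace X] (c : ℝ → X) (β : X → ℝ) : Prop :=
  ∀ q, Tendsto (fun t => dist q (c t) - t) atTop (𝓝 (β q))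

section Rays

variable {X : Type*} [MetricSpace X]

theorem IsGeodesicSpace.exists_isUnitSpeedSegment (hX : IsGeodesicSpace X) (x y : X) :
    ∃ c : ℝ → X, IsUnitSpeedSegment c (dist x y) ∧ c 0 = x ∧ c (dist x y) = y := by
  obtain ⟨g, L, hL, hg, rfl, rfl⟩ := hX x y
  have hdist : dist (g 0) (g 1) = L := by simpa using hg 0 (by simp) 1 (by simp)
  rw [hdist]
  rcases hL.eq_or_lt with rfl | hpos
  · refine ⟨fun _ => g 0, ?_, rfl, dist_eq_zero.1 hdist⟩
    intro s hs t ht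
    simp [le_antisymm hs.2 hs.1, le_antisymm ht.2 ht.1]
  · refine ⟨fun s => g (s / L), ?_, by simp, by simp [hpos.ne']⟩
    have hmem {s : ℝ} (hs : s ∈ Set.Icc 0 L) : s / L ∈ Set.Icc (0 : ℝ) 1 :=
      ⟨div_nonneg hs.1 hL, div_le_one_of_le₀ hs.2 hL⟩
    intro s hs t ht
    rw [hg _ (hmem hs) _ (hmem ht), ← sub_div, abs_div, abs_of_pos hpos,
      mul_div_cancel₀ _ hpos.ne']

theorem IsGeodesicSpace.hasApproxIntermediatePoints (hX : IsGeodesicSpace X) :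
    HasApproxIntermediatePoints X := by
  intro x z δ ε hδ hε hxz
  rcases lt_or_ge (dist x z) ε with hlt | hge
  · exact ⟨x, by simpa using hδ, hlt⟩
  obtain ⟨c, hc, hc0, hc1⟩ := hX.exists_isUnitSpeedSegment x z
  obtain ⟨s, hs, hsmin⟩ : ∃ s, dist x z - ε < s ∧ s < min δ (dist x z) :=
    exists_between (lt_min (by linarith) (by linarith))
  obtain ⟨hsδ, hsd⟩ := lt_min_iff.1 hsmin
  have hs0 : 0 ≤ s := by linarith
  have hxs : dist x (c s) = s := by
    rw [← hc0, hc 0 ⟨le_rfl, dist_nonneg⟩ s ⟨hs0, hsd.le⟩, zero_sub, abs_neg, abs_of_nonneg hs0]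
  have hsz : dist (c s) z = dist x z - s := by
    rw [dist_comm, ← hc1, hc _ ⟨dist_nonneg, le_rfl⟩ s ⟨hs0, hsd.le⟩, hc1,
      abs_of_pos (sub_pos.2 hsd)]
  exact ⟨c s, by linarith, by linarith⟩

theorem exists_isUnitSpeedRay_of_tendsto_length [ProperSpace X] {ι : Type*} {l : Filter ι}
    [l.NeBot] {c : ι → ℝ → X} {ℓ : ι → ℝ} {p : X} (hℓ : Tendsto ℓ l atTop)
    (hc : ∀ i, IsUnitSpeedSegment (c i) (ℓ i)) (hc0 : ∀ i, c i 0 = p) :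
    ∃ d : ℝ → X, IsUnitSpeedRay d ∧ d 0 = p := by
  -- Pointwise limits along an ultrafilter replace the diagonal argument of Arzelà–Ascoli.
  let u := Ultrafilter.of l
  have hmem : ∀ s, 0 ≤ s → ∀ᶠ i in u, s ∈ Set.Icc 0 (ℓ i) := fun s hs =>
    ((hℓ.mono_left (Ultrafilter.of_le l)).eventually_ge_atTop s).mono fun _ hi => ⟨hs, hi⟩
  have hlim : ∀ s, 0 ≤ s → ∃ z, Tendsto (fun i => c i s) u (𝓝 z) := by
    intro s hs
    have hball : ∀ᶠ i in u, c i s ∈ Metric.closedBall p s := by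
      filter_upwards [hmem s hs, hmem 0 le_rfl] with i hsi h0i
      simp [← hc0 i, hc i s hsi 0 h0i, abs_of_nonneg hs]
    obtain ⟨z, -, hz⟩ := (isCompact_closedBall p s).ultrafilter_le_nhds' (u.map (c · s)) hball
    exact ⟨z, hz⟩
  have : Nonempty X := ⟨p⟩
  choose! d hd using hlim
  refine ⟨d, fun s t hs ht => ?_, ?_⟩
  · refine tendsto_nhds_unique ((hd s hs).dist (hd t ht)) (tendsto_const_nhds.congr' ?_)
    filter_upwards [hmem s hs, hmem t ht] with i hsi hti
    exact (hc i s hsi t hti).symm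
  · exact tendsto_nhds_unique (hd 0 le_rfl) (by simp only [hc0, tendsto_const_nhds])

theorem IsGeodesicSpace.exists_isUnitSpeedRay [ProperSpace X] [NoncompactSpace X]
    (hX : IsGeodesicSpace X) (p : X) : ∃ c : ℝ → X, IsUnitSpeedRay c ∧ c 0 = p := by
  choose c hc hc0 _ using hX.exists_isUnitSpeedSegment p
  exact exists_isUnitSpeedRay_of_tendsto_length (tendsto_dist_left_cocompact_atTop p) hc hc0

theorem IsUnitSpeedRay.antitoneOn_dist_sub {c : ℝ → X} (hc : IsUnitSpeedRay c) (q : X) :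
    AntitoneOn (fun t => dist q (c t) - t) (Set.Ici 0) := by
  intro s hs t ht hst
  have hdist : dist (c s) (c t) = t - s := by
    rw [hc s t hs ht, abs_sub_comm, abs_of_nonneg (sub_nonneg.2 hst)]
  linarith [dist_triangle q (c s) (c t)]

namespace IsBusemannFunction

variable {c : ℝ → X} {β : X → ℝ}

theorem le_dist_sub (hβ : IsBusemannFunction c β) (hc : IsUnitSpeedRay c) (q : X) {t : ℝ}
    (ht : 0 ≤ t) : β q ≤ dist q (c t) - t :=
  le_of_tendsto (hβ q) <| (eventually_ge_atTop t).mono fun _ htu =>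
    hc.antitoneOn_dist_sub q ht (ht.trans htu) htu

theorem neg_dist_le (hβ : IsBusemannFunction c β) (hc : IsUnitSpeedRay c) (q : X) :
    -dist q (c 0) ≤ β q := by
  refine ge_of_tendsto (hβ q) ((eventually_ge_atTop 0).mono fun t ht => ?_)
  have hdist : dist (c 0) (c t) = t := by
    rw [hc 0 t le_rfl ht, zero_sub, abs_neg, abs_of_nonneg ht]
  linarith [dist_triangle_left (c 0) (c t) q]

theorem lipschitzWith (hβ : IsBusemannFunction c β) : LipschitzWith 1 β := by
  refine LipschitzWith.of_le_add fun p q =>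
    le_of_tendsto_of_tendsto' (hβ p) ((hβ q).add_const _) fun t => ?_
  linarith [dist_triangle p q (c t)]

theorem tendsto_dist_atTop (hβ : IsBusemannFunction c β) (q : X) :
    Tendsto (fun t => dist q (c t)) atTop atTop := by
  simpa using (hβ q).add_atTop tendsto_id

end IsBusemannFunction

section Infimum

variable {ι : Type*} {c : ι → ℝ → X} {β : ι → X → ℝ} {b : X → ℝ}

theorem exists_dist_lt_lt_of_isGLB_busemann (hX : HasApproxIntermediatePoints X)
    (hc : ∀ i, IsUnitSpeedRay (c i)) (hβ : ∀ i, IsBusemannFunction (c i) (β i))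
    (hb : ∀ p, IsGLB (Set.range fun i => β i p) (b p)) (p : X) {r : ℝ} (hr : 0 < r) :
    ∃ q, dist p q < r ∧ b q < b p := by
  obtain ⟨_, ⟨i, rfl⟩, -, hi⟩ := (hb p).exists_between (lt_add_of_pos_right (b p) (half_pos hr))
  obtain ⟨T, hT0, hTfar, hTb⟩ : ∃ T, 0 ≤ T ∧ r < dist p (c i T) ∧
      dist p (c i T) - T < b p + r / 2 :=
    ((eventually_ge_atTop 0).and <| ((hβ i).tendsto_dist_atTop p |>.eventually_gt_atTop r).and <|
      (hβ i p).eventually_lt_const hi).exists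
  obtain ⟨q, hpq, hqT⟩ : ∃ q, dist p q < r ∧ dist q (c i T) < dist p (c i T) - r / 2 :=
    hX hr (by linarith) (by linarith)
  refine ⟨q, hpq, ?_⟩
  calc b q ≤ β i q := (hb q).1 ⟨i, rfl⟩
    _ ≤ dist q (c i T) - T := (hβ i).le_dist_sub (hc i) q hT0
    _ < b p := by linarith

theorem not_isLocalMin_of_isGLB_busemann (hX : HasApproxIntermediatePoints X)
    (hc : ∀ i, IsUnitSpeedRay (c i)) (hβ : ∀ i, IsBusemannFunction (c i) (β i))
    (hb : ∀ p, IsGLB (Set.range fun i => β i p) (b p)) (p : X) : ¬ IsLocalMin b p := by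
  intro hmin
  obtain ⟨r, hr, hball⟩ := Metric.eventually_nhds_iff.1 hmin
  obtain ⟨q, hpq, hbq⟩ := exists_dist_lt_lt_of_isGLB_busemann hX hc hβ hb p hr
  exact hbq.not_ge (hball (dist_comm p q ▸ hpq))

theorem busemann_level_eq_frontier_general (hX : HasApproxIntermediatePoints X)
    (hc : ∀ i, IsUnitSpeedRay (c i)) (hβ : ∀ i, IsBusemannFunction (c i) (β i))
    (hb : ∀ p, IsGLB (Set.range fun i => β i p) (b p)) (a : ℝ) :
    b ⁻¹' {a} = frontier (b ⁻¹' Set.Ici a) :=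
  (frontier_preimage_Ici_of_forall_not_isLocalMin
    (lipschitzWith_of_forall_isGLB (fun i => (hβ i).lipschitzWith) hb).continuous
    (not_isLocalMin_of_isGLB_busemann hX hc hβ hb) a).symm

end Infimum

theorem isGLB_sInf_busemann [ProperSpace X] [NoncompactSpace X] (hX : IsGeodesicSpace X) (p₀ : X)
    {busemann : (ℝ → X) → X → ℝ}
    (hbus : ∀ c, IsUnitSpeedRay c → IsBusemannFunction c (busemann c)) (p : X) :
    IsGLB (Set.range fun c : {c : ℝ → X // IsUnitSpeedRay c ∧ c 0 = p₀} => busemann c p)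
      (sInf {v | ∃ c : ℝ → X, IsUnitSpeedRay c ∧ c 0 = p₀ ∧ v = busemann c p}) := by
  have hset : {v | ∃ c : ℝ → X, IsUnitSpeedRay c ∧ c 0 = p₀ ∧ v = busemann c p} =
      Set.range fun c : {c : ℝ → X // IsUnitSpeedRay c ∧ c 0 = p₀} => busemann c p := by
    ext v
    simp [and_assoc, eq_comm]
  rw [hset]
  obtain ⟨c, hc⟩ := hX.exists_isUnitSpeedRay p₀
  refine isGLB_csInf ⟨_, ⟨c, hc⟩, rfl⟩ ⟨-dist p p₀, ?_⟩
  rintro _ ⟨⟨d, hd, rfl⟩, rfl⟩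
  exact (hbus d hd).neg_dist_le hd p

end Rays

/-- Let `X` be a proper geodesic noncompact metric space, `p₀ ∈ X`, and let
`b` be the infimum over all unit-speed rays `c` with `c 0 = p₀` of the Busemann functions
`b_c`.  Then for every `t ∈ ℝ` the level set `b ⁻¹ {-t}` equals the topological frontier of
the superlevel set `C_t = b ⁻¹ [-t,∞)`. -/
theorem busemann_level_eq_frontier {X : Type*} [MetricSpace X] [ProperSpace X]
    (hgeo : ∀ x y : X, ∃ (g : ℝ → X) (L : ℝ), 0 ≤ L ∧
      (∀ s ∈ Set.Icc (0 : ℝ) 1, ∀ t ∈ Set.Icc (0 : ℝ) 1, dist (g s) (g t) = L * |s - t|) ∧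
      g 0 = x ∧ g 1 = y)
    (hnc : ¬ CompactSpace X) (p₀ : X)
    (busemann : (ℝ → X) → X → ℝ)
    (hbus : ∀ c : ℝ → X, IsUnitSpeedRay c → ∀ q : X,
      Tendsto (fun t => dist q (c t) - t) atTop (nhds (busemann c q)))
    (b : X → ℝ)
    (hb : ∀ p : X, b p = sInf {v | ∃ c : ℝ → X, IsUnitSpeedRay c ∧ c 0 = p₀ ∧ v = busemann c p})
    (t : ℝ) :
    b ⁻¹' {-t} = frontier (b ⁻¹' Set.Ici (-t)) := by
  have : NoncompactSpace X := not_compactSpace_iff.1 hnc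
  have hX : IsGeodesicSpace X := hgeo
  exact busemann_level_eq_frontier_general hX.hasApproxIntermediatePoints
    (fun c : {c : ℝ → X // IsUnitSpeedRay c ∧ c 0 = p₀} => c.2.1) (fun c => hbus c c.2.1)
    (fun p => hb p ▸ isGLB_sInf_busemann hX p₀ hbus p) (-t)
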